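/- Let ρ ∈ (0,1), κ > 0, N1 ≥ N2 > 0, and D1, D2 ∈ (0,1) with (1−D1)·(1−D2) ≥ ρ²; set δ := 1−D1, A(ν) := ((1−ρ²)/(D1·(1−ν²δ) − (ρ−νδ)²))^{1/κ}, P(ν) := N1·(A(ν) − 1) + N2·(((1−ν²δ)/D2)^{1/κ} − 1)·A(ν), P_sep := inf{ P(ν) : ν ∈ [ρ, min(1/ρ, ρ/δ, √((1−D2)/δ))] }, and P_outer := N1·(D1^{−1/κ} − 1) + N2·D1^{−1/κ}·(((1−ρ²)/D2)^{1/κ} − 1). Then P_sep / P_outer ≤ min{ 1 + (1+ρ)^{1/κ}·((1+ρ²)^{1/κ} − 1)/((1+ρ)^{1/κ} − (1−ρ)^{1/κ}) , ((1+ρ)²/(1+2ρ))^{1/κ} + (((1+ρ)²/(1+2ρ))^{1/κ} − 1)/((1−ρ²)^{−1/κ} − 1) }. -/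

import Mathlib

/-- `D1 * D2 ≤ (1 - ρ)²` on the region. -/
lemma aux_prod (ρ D1 D2 : ℝ) (h0 : 0 < ρ) (hD1 : D1 < 1) (hD2 : D2 < 1)
    (hreg : (1 - D1) * (1 - D2) ≥ ρ ^ 2) (h1 : 0 < D1) (h2 : 0 < D2) :
    D1 * D2 ≤ (1 - ρ) ^ 2 := by
  have h : 2 * ρ ≤ (1 - D1) + (1 - D2) := by
    apply (pow_le_pow_iff_left₀ (by linarith) (by linarith) (two_ne_zero)).1
    nlinarith [sq_nonneg (D1 - D2)]
  by_contra hc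
  push Not at hc
  have h3 : (1 - D1) * (1 - D2) < 1 := by nlinarith
  have hr : ρ < 1 := by nlinarith
  -- AM-GM: √(D1 D2) + √((1-D1)(1-D2)) ≤ 1, in squared form
  have e : 4 * (D1 * D2) ≤ (D1 + D2) ^ 2 := by nlinarith [sq_nonneg (D1 - D2)]
  have h5 : (2 * (1 - ρ)) ^ 2 < (D1 + D2) ^ 2 := by nlinarith
  have h6 : 2 * (1 - ρ) < D1 + D2 := lt_of_pow_lt_pow_left₀ 2 (by linarith) h5
  linarith

set_option maxHeartbeats 4000000 in
/-- For `ρ ∈ (0,1)`, `κ > 0`, `N1 ≥ N2 > 0`, `D1, D2 ∈ (0,1)` with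
`(1−D1)(1−D2) ≥ ρ²` and `δ := 1−D1`, with
`A(ν) := ((1−ρ²)/(D1(1−ν²δ) − (ρ−νδ)²))^{1/κ}`,
`P(ν) := N1(A(ν) − 1) + N2(((1−ν²δ)/D2)^{1/κ} − 1)·A(ν)`,
`P_sep := inf{P(ν) : ν ∈ [ρ, min(1/ρ, ρ/δ, √((1−D2)/δ))]}` and
`P_outer := N1(D1^{−1/κ} − 1) + N2·D1^{−1/κ}·(((1−ρ²)/D2)^{1/κ} − 1)`, the ratio
`P_sep/P_outer` is at most the minimum of the two universal bounds. -/
theorem universal_power_ratio_bound (ρ κ N1 N2 D1 D2 : ℝ)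
    (hρ : ρ ∈ Set.Ioo (0 : ℝ) 1) (hκ : 0 < κ) (hN2 : 0 < N2) (hN : N2 ≤ N1)
    (hD1 : D1 ∈ Set.Ioo (0 : ℝ) 1) (hD2 : D2 ∈ Set.Ioo (0 : ℝ) 1)
    (hreg : (1 - D1) * (1 - D2) ≥ ρ ^ 2) :
    sInf ((fun ν : ℝ =>
        N1 * (((1 - ρ ^ 2) /
            (D1 * (1 - ν ^ 2 * (1 - D1)) - (ρ - ν * (1 - D1)) ^ 2)) ^ (1 / κ) - 1)
        + N2 * (((1 - ν ^ 2 * (1 - D1)) / D2) ^ (1 / κ) - 1)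
          * ((1 - ρ ^ 2) /
            (D1 * (1 - ν ^ 2 * (1 - D1)) - (ρ - ν * (1 - D1)) ^ 2)) ^ (1 / κ)) ''
      Set.Icc ρ (min (1 / ρ)
        (min (ρ / (1 - D1)) (Real.sqrt ((1 - D2) / (1 - D1)))))) /
    (N1 * (D1 ^ (-1 / κ) - 1)
        + N2 * D1 ^ (-1 / κ) * (((1 - ρ ^ 2) / D2) ^ (1 / κ) - 1))
      ≤ min
        (1 + (1 + ρ) ^ (1 / κ) * ((1 + ρ ^ 2) ^ (1 / κ) - 1) /
            ((1 + ρ) ^ (1 / κ) - (1 - ρ) ^ (1 / κ)))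
        (((1 + ρ) ^ 2 / (1 + 2 * ρ)) ^ (1 / κ)
          + (((1 + ρ) ^ 2 / (1 + 2 * ρ)) ^ (1 / κ) - 1) /
              ((1 - ρ ^ 2) ^ (-1 / κ) - 1)) := by
  obtain ⟨r0, r1⟩ := hρ
  obtain ⟨d10, d11⟩ := hD1
  obtain ⟨d20, d21⟩ := hD2
  have hN1 : 0 < N1 := lt_of_lt_of_le hN2 hN
  have hneg : -1 / κ = -(1 / κ) := by ring
  rw [hneg]
  have hs : 0 < 1 / κ := by positivity
  generalize 1 / κ = s at hs
  have hr2 : ρ ^ 2 < 1 := by nlinarith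
  have hd1r : D1 < 1 - ρ ^ 2 := by nlinarith
  have hd2r : D2 < 1 - ρ ^ 2 := by nlinarith
  have hδ : 0 < 1 - D1 := by linarith
  set f : ℝ → ℝ := fun ν : ℝ =>
        N1 * (((1 - ρ ^ 2) /
            (D1 * (1 - ν ^ 2 * (1 - D1)) - (ρ - ν * (1 - D1)) ^ 2)) ^ s - 1)
        + N2 * (((1 - ν ^ 2 * (1 - D1)) / D2) ^ s - 1)
          * ((1 - ρ ^ 2) /
            (D1 * (1 - ν ^ 2 * (1 - D1)) - (ρ - ν * (1 - D1)) ^ 2)) ^ s with hf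
  have hden : ∀ ν, D1 * (1 - ν ^ 2 * (1 - D1)) - (ρ - ν * (1 - D1)) ^ 2
      = D1 * (1 - ρ ^ 2) - (1 - D1) * (ν - ρ) ^ 2 := fun ν => by ring
  have hX1 : 1 < D1 ^ (-s) := Real.one_lt_rpow_of_pos_of_lt_one_of_neg d10 d11 (by linarith)
  set X := D1 ^ (-s) with hX
  have hY1 : 1 ≤ ((1 - ρ ^ 2) / D2) ^ s :=
    Real.one_le_rpow ((one_le_div d20).2 hd2r.le) hs.le
  set Y := ((1 - ρ ^ 2) / D2) ^ s with hY
  have hE1 : N1 * (X - 1) ≤ N1 * (X - 1) + N2 * X * (Y - 1) := by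
    have : 0 ≤ N2 * X * (Y - 1) := by
      apply mul_nonneg (by positivity); linarith
    linarith
  have hE2 : N2 * (X * Y - 1) ≤ N1 * (X - 1) + N2 * X * (Y - 1) := by nlinarith
  set E := N1 * (X - 1) + N2 * X * (Y - 1) with hE
  have hE0 : 0 < E := lt_of_lt_of_le (mul_pos hN1 (by linarith)) hE1
  -- the feasible interval is `[ρ, ρ/δ]`
  have hmin : min (1 / ρ) (min (ρ / (1 - D1)) (Real.sqrt ((1 - D2) / (1 - D1))))
      = ρ / (1 - D1) := by
    have e1 : ρ / (1 - D1) ≤ Real.sqrt ((1 - D2) / (1 - D1)) := by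
      apply Real.le_sqrt_of_sq_le
      rw [div_pow, div_le_div_iff₀ (by positivity) hδ]
      nlinarith
    have e2 : ρ / (1 - D1) ≤ 1 / ρ := by
      rw [div_le_div_iff₀ hδ r0]; nlinarith
    rw [min_eq_left e1, min_eq_right e2]
  rw [hmin]
  have hle : ∀ ν ∈ Set.Icc ρ (ρ / (1 - D1)),
      sInf (f '' Set.Icc ρ (ρ / (1 - D1))) ≤ f ν := by
    intro ν hν
    apply csInf_le _ (Set.mem_image_of_mem f hν)
    refine ⟨-N1, ?_⟩
    rintro _ ⟨μ, ⟨m1, m2⟩, rfl⟩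
    rw [le_div_iff₀ hδ] at m2
    have b1 : 0 ≤ 1 - μ ^ 2 * (1 - D1) := by
      have : (μ * (1 - D1)) ^ 2 ≤ ρ ^ 2 :=
        pow_le_pow_left₀ (mul_nonneg (by linarith) hδ.le) m2 2
      have h3 : μ ^ 2 * (1 - D1) * (1 - D1) ≤ 1 * (1 - D1) := by nlinarith
      linarith [le_of_mul_le_mul_right h3 hδ]
    have b2 : 0 ≤ D1 * (1 - μ ^ 2 * (1 - D1)) - (ρ - μ * (1 - D1)) ^ 2 := by
      rw [hden]
      have h2 : ((1 - D1) * (μ - ρ)) ^ 2 ≤ (D1 * ρ) ^ 2 :=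
        pow_le_pow_left₀ (mul_nonneg hδ.le (by linarith)) (by nlinarith) 2
      have h3 : (1 - D1) * ((1 - D1) * (μ - ρ) ^ 2) ≤ (1 - D1) * (D1 * (1 - ρ ^ 2)) := by
        have : D1 * (D1 * ρ ^ 2) ≤ D1 * ((1 - D1) * (1 - ρ ^ 2)) := by
          apply mul_le_mul_of_nonneg_left _ d10.le; nlinarith
        nlinarith
      linarith [le_of_mul_le_mul_left h3 hδ]
    have hA : 0 ≤ ((1 - ρ ^ 2) /
            (D1 * (1 - μ ^ 2 * (1 - D1)) - (ρ - μ * (1 - D1)) ^ 2)) ^ s :=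
      Real.rpow_nonneg (div_nonneg (by linarith) b2) s
    have hB : 0 ≤ ((1 - μ ^ 2 * (1 - D1)) / D2) ^ s :=
      Real.rpow_nonneg (div_nonneg b1 d20.le) s
    simp only [hf]
    have := mul_nonneg (sub_nonneg.2 hN) hA
    have := mul_nonneg hN2.le (mul_nonneg hB hA)
    nlinarith
  rw [le_min_iff, div_le_iff₀ hE0, div_le_iff₀ hE0]
  constructor
  · refine (hle ρ ⟨le_rfl, ?_⟩).trans ?_
    · rw [le_div_iff₀ hδ]; nlinarith
    have hA : ((1 - ρ ^ 2) /
        (D1 * (1 - ρ ^ 2 * (1 - D1)) - (ρ - ρ * (1 - D1)) ^ 2)) ^ s = X := by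
      rw [hden, hX, Real.rpow_neg d10.le, ← Real.inv_rpow d10.le]
      congr 1
      have : (1 - ρ ^ 2) ≠ 0 := by linarith
      field_simp
      ring
    simp only [hf]
    rw [hA]
    have ha : 1 < (1 + ρ) ^ s := Real.one_lt_rpow (by linarith) hs
    have hb : (1 - ρ) ^ s < 1 := Real.rpow_lt_one (by linarith) (by linarith) hs
    have hb0 : 0 < (1 - ρ) ^ s := Real.rpow_pos_of_pos (by linarith) s
    have hc : 1 ≤ (1 + ρ ^ 2) ^ s := Real.one_le_rpow (by nlinarith) hs.le
    have hab : (1 - ρ ^ 2) ^ s = (1 + ρ) ^ s * (1 - ρ) ^ s := by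
      rw [← Real.mul_rpow (by linarith) (by linarith)]; congr 1; ring
    have habc : (1 - ρ ^ 2 * (1 - D1)) ^ s
        ≤ (1 + ρ) ^ s * (1 - ρ) ^ s * (1 + ρ ^ 2) ^ s := by
      rw [← hab, ← Real.mul_rpow (by linarith) (by positivity)]
      apply Real.rpow_le_rpow (by nlinarith) (by nlinarith) hs.le
    have hdd : (D1 * D2) ^ s ≤ (1 - ρ) ^ s * (1 - ρ) ^ s := by
      rw [← Real.mul_rpow (by linarith) (by linarith)]
      apply Real.rpow_le_rpow (by positivity) _ hs.le
      have := aux_prod ρ D1 D2 r0 d11 d21 hreg d10 d20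
      linarith
    have hZ0 : 0 < (D1 * D2) ^ s := Real.rpow_pos_of_pos (by positivity) s
    have hXZ : X / D2 ^ s = 1 / (D1 * D2) ^ s := by
      rw [hX, Real.rpow_neg d10.le, Real.mul_rpow d10.le d20.le]
      field_simp
    have hXY : X * Y = (1 - ρ ^ 2) ^ s / (D1 * D2) ^ s := by
      rw [hY, Real.div_rpow (by linarith) d20.le]
      linear_combination (1 - ρ ^ 2) ^ s * hXZ
    have hXY' : X * ((1 - ρ ^ 2 * (1 - D1)) / D2) ^ s
        = (1 - ρ ^ 2 * (1 - D1)) ^ s / (D1 * D2) ^ s := by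
      rw [Real.div_rpow (by nlinarith) d20.le]
      linear_combination (1 - ρ ^ 2 * (1 - D1)) ^ s * hXZ
    set a := (1 + ρ) ^ s
    set b := (1 - ρ) ^ s
    set c := (1 + ρ ^ 2) ^ s
    set Z := (D1 * D2) ^ s
    have hab0 : 0 < a - b := by linarith
    set K := a * (c - 1) / (a - b) with hK
    have hK0 : 0 ≤ K := div_nonneg (mul_nonneg (by linarith) (by linarith)) hab0.le
    have hKe : K * (a - b) = a * (c - 1) := by rw [hK]; field_simp
    have key : X * ((1 - ρ ^ 2 * (1 - D1)) / D2) ^ s - X * Y ≤ K * (X * Y - 1) := by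
      rw [hXY, hXY', hab]
      have h1 : (1 - ρ ^ 2 * (1 - D1)) ^ s - a * b ≤ K * (a * b - Z) := by
        have := mul_le_mul_of_nonneg_left hdd hK0
        nlinarith
      have h2 := div_le_div_of_nonneg_right h1 hZ0.le
      have h3 : K * (a * b / Z - 1) = K * (a * b - Z) / Z := by field_simp
      rw [h3, ← sub_div]; exact h2
    have k1 := mul_le_mul_of_nonneg_left key hN2.le
    have k2 := mul_le_mul_of_nonneg_left hE2 hK0
    rw [hE] at k2 ⊢
    linarith
  · have hq1 : Real.sqrt (1 - D1) < 1 := by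
      rw [Real.sqrt_lt' one_pos]; linarith
    have hqr : ρ < Real.sqrt (1 - D1) := Real.lt_sqrt_of_sq_lt (by linarith)
    have hqq : Real.sqrt (1 - D1) ^ 2 = 1 - D1 := Real.sq_sqrt hδ.le
    set q := Real.sqrt (1 - D1)
    have hq0 : 0 < q := r0.trans hqr
    have hD1q : D1 = 1 - q ^ 2 := by linarith
    refine (hle (ρ / q) ⟨?_, ?_⟩).trans ?_
    · rw [le_div_iff₀ hq0]; nlinarith
    · apply div_le_div_of_nonneg_left r0.le hδ; nlinarith
    simp only [hf]
    have e1 : 1 - (ρ / q) ^ 2 * (1 - D1) = 1 - ρ ^ 2 := by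
      rw [← hqq]; field_simp
    have e2 : D1 * (1 - ρ ^ 2) - (ρ - ρ / q * (1 - D1)) ^ 2
        = D1 * (1 - ρ ^ 2) - ρ ^ 2 * (1 - q) ^ 2 := by
      rw [← hqq]; field_simp
    rw [e1, e2]
    have hT1 : 1 ≤ (1 + ρ) ^ 2 / (1 + 2 * ρ) := by
      rw [le_div_iff₀ (by linarith)]; nlinarith
    have hlow : D1 * (1 - ρ ^ 2) * (1 + 2 * ρ)
        ≤ (1 + ρ) ^ 2 * (D1 * (1 - ρ ^ 2) - ρ ^ 2 * (1 - q) ^ 2) := by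
      have : 0 ≤ ρ ^ 2 * (1 + ρ) * (1 - q) * (2 * (q - ρ)) := by
        apply mul_nonneg
        · apply mul_nonneg (by positivity); linarith
        · linarith
      rw [hD1q]; nlinarith
    have hpos : 0 < D1 * (1 - ρ ^ 2) * (1 + 2 * ρ) := by
      apply mul_pos (mul_pos d10 (by linarith)); linarith
    have hDpos : 0 < D1 * (1 - ρ ^ 2) - ρ ^ 2 * (1 - q) ^ 2 :=
      pos_of_mul_pos_right (lt_of_lt_of_le hpos hlow) (by positivity)
    have hAle : ((1 - ρ ^ 2) / (D1 * (1 - ρ ^ 2) - ρ ^ 2 * (1 - q) ^ 2)) ^ s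
        ≤ ((1 + ρ) ^ 2 / (1 + 2 * ρ)) ^ s * X := by
      rw [hX, Real.rpow_neg d10.le, ← Real.inv_rpow d10.le,
        ← Real.mul_rpow (by positivity) (by positivity)]
      apply Real.rpow_le_rpow (div_nonneg (by linarith) hDpos.le) _ hs.le
      rw [← div_eq_mul_inv, div_div, div_le_div_iff₀ hDpos (by positivity)]
      linarith
    have hT : 1 ≤ ((1 + ρ) ^ 2 / (1 + 2 * ρ)) ^ s := Real.one_le_rpow hT1 hs.le
    have hW : 1 < (1 - ρ ^ 2) ^ (-s) :=
      Real.one_lt_rpow_of_pos_of_lt_one_of_neg (by linarith) (by nlinarith) (by linarith)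
    have hWX : (1 - ρ ^ 2) ^ (-s) ≤ X :=
      Real.rpow_le_rpow_of_nonpos d10 hd1r.le (by linarith)
    set T := ((1 + ρ) ^ 2 / (1 + 2 * ρ)) ^ s
    set W := (1 - ρ ^ 2) ^ (-s)
    set A := ((1 - ρ ^ 2) / (D1 * (1 - ρ ^ 2) - ρ ^ 2 * (1 - q) ^ 2)) ^ s
    have hWE : N1 * (W - 1) ≤ E := by nlinarith
    have hfrac : (T - 1) * N1 ≤ (T - 1) / (W - 1) * E := by
      rw [div_mul_eq_mul_div, le_div_iff₀ (by linarith)]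
      have := mul_le_mul_of_nonneg_left hWE (sub_nonneg.2 hT)
      linarith
    have hco : 0 ≤ N1 - N2 + N2 * Y := by
      have : 0 < N2 * Y := by positivity
      linarith
    have k := mul_le_mul_of_nonneg_left hAle hco
    have hTE : T * E = (N1 - N2 + N2 * Y) * (T * X) - T * N1 := by rw [hE]; ring
    linarith
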